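/- arXiv:1505.01379 — 2 statements merged into one kernel-verified Lean document; each statement's English description precedes it below -/
import Mathlib

section
/- Let 𝔽_q be a finite field of characteristic p and let u : ℕ → 𝔽_q be a sequence. The formal power series f = Σ_{n≥0} u_n Xⁿ ∈ 𝔽_q[[X]] is algebraic over the rational function field 𝔽_q(X) (i.e., some nonzero polynomial in Y with coefficients in 𝔽_q[X] vanishes at f) if and only if the p-kernel of u, namely the set of sequences { n ↦ u(n·p^k + r) : k ∈ ℕ, 0 ≤ r < p^k }, is finite. -/
namespace ChristolAux
open PowerSeries

section
variable {F : Type*} [Field F]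

/-- Cartier operator on power series. -/
noncomputable def car (q r : ℕ) : PowerSeries F →ₗ[F] PowerSeries F where
  toFun f := PowerSeries.mk fun n => coeff (n * q + r) f
  map_add' f g := by ext; simp
  map_smul' a f := by ext; simp

@[simp] lemma coeff_car (q r n : ℕ) (f : PowerSeries F) :
    coeff n (car q r f) = coeff (n * q + r) f := by simp [car]

/-- Cartier operator on polynomials. -/
noncomputable def carP (q r : ℕ) (c : Polynomial F) : Polynomial F :=
  ∑ i ∈ Finset.range (c.natDegree + 1), Polynomial.monomial i (c.coeff (i * q + r))

lemma coeff_carP {q : ℕ} (hq : 0 < q) (r n : ℕ) (c : Polynomial F) :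
    (carP q r c).coeff n = c.coeff (n * q + r) := by
  simp only [carP, Polynomial.finsetSum_coeff, Polynomial.coeff_monomial]
  rw [Finset.sum_ite_eq' (Finset.range (c.natDegree + 1)) n]
  split_ifs with h
  · rfl
  · symm
    apply Polynomial.coeff_eq_zero_of_natDegree_lt
    simp at h
    nlinarith

lemma coe_carP {q : ℕ} (hq : 0 < q) (r : ℕ) (c : Polynomial F) :
    ((carP q r c : Polynomial F) : PowerSeries F) = car q r c := by
  ext n
  simp [coeff_carP hq]

lemma natDegree_carP {q : ℕ} (hq : 0 < q) (r N : ℕ) (c : Polynomial F)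
    (h : c.natDegree < (N + 1) * q) : (carP q r c).natDegree ≤ N := by
  rw [Polynomial.natDegree_le_iff_coeff_eq_zero]
  intro n hn
  rw [coeff_carP hq]
  apply Polynomial.coeff_eq_zero_of_natDegree_lt
  have : (N + 1) * q ≤ n * q := Nat.mul_le_mul_right _ hn
  omega

lemma exists_carP_ne {q : ℕ} (hq : 0 < q) (c : Polynomial F) (hc : c ≠ 0) :
    ∃ r < q, carP q r c ≠ 0 := by
  refine ⟨c.natDegree % q, Nat.mod_lt _ hq, fun h => ?_⟩
  have := coeff_carP hq (c.natDegree % q) (c.natDegree / q) c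
  rw [h, Nat.div_add_mod'] at this
  simp at this
  exact hc (Polynomial.leadingCoeff_eq_zero.1 this.symm)

lemma coeff_X_pow_mul_expand {q : ℕ} (hq : q ≠ 0) {s : ℕ} (hs : s < q) (k : PowerSeries F) (n : ℕ) :
    coeff n ((X : PowerSeries F) ^ s * expand q hq k) = if n % q = s then coeff (n / q) k else 0 := by
  rw [coeff_X_pow_mul', coeff_expand]
  by_cases h : n % q = s
  · subst h
    have h1 : n - n % q = q * (n / q) := by have := Nat.div_add_mod n q; omega
    rw [if_pos (Nat.mod_le _ _), h1, if_pos (Dvd.intro _ rfl), if_pos rfl,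
      Nat.mul_div_cancel_left _ (Nat.pos_of_ne_zero hq)]
  · rw [if_neg h]
    split_ifs with h1 h2
    · exfalso
      obtain ⟨m, hm⟩ := h2
      apply h
      have : n = s + q * m := by omega
      rw [this, Nat.add_mul_mod_self_left, Nat.mod_eq_of_lt hs]
    · rfl
    · rfl

lemma decomp {q : ℕ} (hq : q ≠ 0) (f : PowerSeries F) :
    f = ∑ s ∈ Finset.range q, (X : PowerSeries F) ^ s * expand q hq (car q s f) := by
  ext n
  rw [map_sum, Finset.sum_congr rfl (fun s hs =>
    coeff_X_pow_mul_expand hq (Finset.mem_range.1 hs) _ _), Finset.sum_ite_eq,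
    if_pos (Finset.mem_range.2 (Nat.mod_lt _ (Nat.pos_of_ne_zero hq))), coeff_car,
    Nat.div_add_mod']

lemma car_expand_mul {q : ℕ} (hq : q ≠ 0) {r : ℕ} (hr : r < q) (g h : PowerSeries F) :
    car q r (expand q hq g * h) = g * car q r h := by
  conv_lhs => rw [decomp hq h, Finset.mul_sum]
  have : ∀ s ∈ Finset.range q, car q r (expand q hq g * (X ^ s * expand q hq (car q s h))) =
      if r = s then g * car q s h else 0 := by
    intro s hs
    have h1 : expand q hq g * (X ^ s * expand q hq (car q s h)) =
      X ^ s * expand q hq (g * car q s h) := by rw [map_mul]; ring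
    rw [h1]
    ext n
    rw [coeff_car, coeff_X_pow_mul_expand hq (Finset.mem_range.1 hs)]
    have h2 : (n * q + r) % q = r := by
      rw [Nat.mul_add_mod_self_right, Nat.mod_eq_of_lt hr]
    have h3 : (n * q + r) / q = n := by
      rw [mul_comm, Nat.mul_add_div (Nat.pos_of_ne_zero hq), Nat.div_eq_of_lt hr, add_zero]
    rw [h2, h3]
    split_ifs <;> simp
  rw [map_sum, Finset.sum_congr rfl this, Finset.sum_ite_eq, if_pos (Finset.mem_range.2 hr)]

lemma smul_eq (c : Polynomial F) (f : PowerSeries F) : c • f = (c : PowerSeries F) * f := by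
  simp [Algebra.smul_def, PowerSeries.algebraMap_apply']

lemma algebraMap_eq :
    algebraMap (Polynomial F) (PowerSeries F) = Polynomial.coeToPowerSeries.ringHom := by
  ext <;> simp [PowerSeries.algebraMap_apply']

variable [Fintype F]

lemma expand_eq_pow (hq : Fintype.card F ≠ 0) (f : PowerSeries F) :
    expand (Fintype.card F) hq f = f ^ Fintype.card F := by
  obtain ⟨p, hp⟩ := CharP.exists F
  obtain ⟨n, hp', hn⟩ := FiniteField.card F p
  have : Fact p.Prime := ⟨hp'⟩
  have h := MvPowerSeries.map_iterateFrobenius_expand (R := F) p hp'.ne_zero f n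
  have h1 : iterateFrobenius F p n = RingHom.id F := by
    rw [iterateFrobenius_eq_pow, FiniteField.frobenius_pow hn, RingHom.one_def]
  rw [h1, MvPowerSeries.map_id] at h
  have h2 : ∀ (m : ℕ) (hm : m ≠ 0), m = p ^ (n : ℕ) → expand m hm f = f ^ m := by
    intro m hm e
    subst e
    exact h
  exact h2 _ hq hn

lemma car_pow_mul {r : ℕ} (hr : r < Fintype.card F) (g h : PowerSeries F) :
    car (Fintype.card F) r (g ^ Fintype.card F * h) = g * car (Fintype.card F) r h := by
  rw [← expand_eq_pow Fintype.card_ne_zero, car_expand_mul _ hr]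

lemma decomp_pow (f : PowerSeries F) :
    f = ∑ s ∈ Finset.range (Fintype.card F),
      (X : PowerSeries F) ^ s * (car (Fintype.card F) s f) ^ Fintype.card F := by
  conv_lhs => rw [decomp (q := Fintype.card F) Fintype.card_ne_zero f]
  simp_rw [expand_eq_pow]


lemma alg_of_finite (K : Set (PowerSeries F)) (hK : K.Finite)
    (hst : ∀ g ∈ K, ∀ r < Fintype.card F, car (Fintype.card F) r g ∈ K)
    (f : PowerSeries F) (hf : f ∈ K) :
    ∃ G : Polynomial (Polynomial F), G ≠ 0 ∧
      Polynomial.eval₂ Polynomial.coeToPowerSeries.ringHom f G = 0 := by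
  classical
  set q := Fintype.card F with hqdef
  have hq1 : 1 < q := Fintype.one_lt_card
  obtain ⟨p, hp⟩ := CharP.exists F
  obtain ⟨n, hp', hn⟩ := FiniteField.card F p
  have : Fact p.Prime := ⟨hp'⟩
  have : CharP (PowerSeries F) p := by
    refine charP_of_injective_ringHom (f := (C : F →+* PowerSeries F)) PowerSeries.C_injective p
  let S : ℕ → Submodule (Polynomial F) (PowerSeries F) :=
    fun j => Submodule.span (Polynomial F) ((fun g => g ^ q ^ j) '' K)
  have hS : Monotone S := by
    apply monotone_nat_of_le_succ
    intro j
    apply Submodule.span_le.2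
    rintro _ ⟨g, hg, rfl⟩
    have h1 : g ^ q ^ j = ∑ s ∈ Finset.range q,
        ((Polynomial.X : Polynomial F) ^ (s * q ^ j)) • (car q s g) ^ q ^ (j + 1) := by
      conv_lhs => rw [decomp_pow g]
      have : q ^ j = p ^ (n * j : ℕ) := by rw [hqdef, hn, pow_mul]
      rw [← hqdef, this, sum_pow_char_pow, ← this]
      refine Finset.sum_congr rfl fun s _ => ?_
      rw [smul_eq, mul_pow, ← pow_mul, ← pow_mul, pow_succ']
      simp
    change g ^ q ^ j ∈ S (j + 1)
    rw [h1]
    refine Submodule.sum_mem _ fun s hs => Submodule.smul_mem _ _ (Submodule.subset_span ?_)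
    exact ⟨_, hst g hg s (Finset.mem_range.1 hs), rfl⟩
  let d := K.ncard
  have hdep : ¬ LinearIndependent (Polynomial F) (fun i : Fin (d + 1) => f ^ q ^ (i : ℕ)) := by
    intro hli
    have hfin : ((fun g => g ^ q ^ d) '' K).Finite := hK.image _
    let _ := hfin.fintype
    have := linearIndependent_le_span_aux' _ hli ((fun g => g ^ q ^ d) '' K) (by
      rintro _ ⟨i, rfl⟩
      exact hS (Nat.lt_succ_iff.1 i.2) (Submodule.subset_span ⟨f, hf, rfl⟩))
    rw [← Nat.card_eq_fintype_card, ← Nat.card_eq_fintype_card, Nat.card_coe_set_eq] at this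
    have h2 := Set.ncard_image_le (f := fun g : PowerSeries F => g ^ q ^ d) hK
    simp at this
    omega
  rw [Fintype.not_linearIndependent_iff] at hdep
  obtain ⟨a, ha, i, hi⟩ := hdep
  refine ⟨∑ i : Fin (d + 1), Polynomial.monomial (q ^ (i : ℕ)) (a i), ?_, ?_⟩
  · intro h
    apply hi
    have h3 := congrArg (fun P => Polynomial.coeff P (q ^ (i : ℕ))) h
    simp only [Polynomial.finsetSum_coeff, Polynomial.coeff_monomial, Polynomial.coeff_zero] at h3
    rw [Finset.sum_eq_single i] at h3
    · simpa using h3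
    · intro b _ hb
      rw [if_neg]
      intro e
      exact hb (Fin.ext (Nat.pow_right_injective hq1 e))
    · simp
  · rw [Polynomial.eval₂_finsetSum, ← ha]
    refine Finset.sum_congr rfl fun i _ => ?_
    rw [Polynomial.eval₂_monomial, smul_eq]
    rfl

lemma exists_rel (f : PowerSeries F) (hf : ∃ G : Polynomial (Polynomial F), G ≠ 0 ∧
      Polynomial.eval₂ Polynomial.coeToPowerSeries.ringHom f G = 0) :
    ∃ (m j : ℕ) (a : ℕ → Polynomial F), j < m ∧ a j ≠ 0 ∧
      ∑ i ∈ Finset.range m, (a i : PowerSeries F) * f ^ Fintype.card F ^ i = 0 := by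
  classical
  have halg : IsAlgebraic (Polynomial F) f := by
    obtain ⟨G, hG, h⟩ := hf
    refine ⟨G, hG, ?_⟩
    rw [Polynomial.aeval_def, algebraMap_eq, h]
  obtain ⟨c, hc, hint⟩ := halg.exists_integral_multiple
  set y := c • f with hy
  obtain ⟨B, hfg, hB⟩ : ∃ B : Submodule (Polynomial F) (PowerSeries F), B.FG ∧
      ∀ k : ℕ, y ^ k ∈ B :=
    ⟨Subalgebra.toSubmodule (Algebra.adjoin (Polynomial F) {y}), hint.fg_adjoin_singleton,
      fun k => Subalgebra.pow_mem _ (Algebra.subset_adjoin (Set.mem_singleton y)) k⟩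
  have : IsNoetherian (Polynomial F) B := isNoetherian_of_fg_of_noetherian _ hfg
  have hdep : ¬ LinearIndependent (Polynomial F) (fun i : ℕ => y ^ Fintype.card F ^ i) := by
    intro hli
    have h1 : LinearIndependent (Polynomial F) (fun i : ℕ =>
        (⟨y ^ Fintype.card F ^ i, hB _⟩ : B)) :=
      LinearIndependent.of_comp B.subtype hli
    have := h1.finite_of_isNoetherian
    exact not_finite ℕ
  rw [not_linearIndependent_iff] at hdep
  obtain ⟨s, g, hg, j, hj, hgj⟩ := hdep
  have hlt : ∀ i ∈ s, i < s.sup id + 1 := fun i hi => Nat.lt_succ_of_le (Finset.le_sup (f := id) hi)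
  refine ⟨s.sup id + 1, j, fun i => if i ∈ s then g i * c ^ Fintype.card F ^ i else 0,
    hlt j hj, ?_, ?_⟩
  · simp only [if_pos hj]
    exact mul_ne_zero hgj (pow_ne_zero _ hc)
  · rw [← Finset.sum_subset (s₁ := s)]
    · rw [← hg]
      refine Finset.sum_congr rfl fun i hi => ?_
      simp only [if_pos hi]
      rw [hy, smul_eq, smul_eq, mul_pow]
      push_cast
      ring
    · intro i hi
      exact Finset.mem_range.2 (hlt i hi)
    · intro i _ hi
      simp [hi]

lemma car_rel (f : PowerSeries F) (m : ℕ) (a : ℕ → Polynomial F) {r : ℕ}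
    (hr : r < Fintype.card F) :
    car (Fintype.card F) r
      (∑ i ∈ Finset.range m, (a i : PowerSeries F) * f ^ Fintype.card F ^ (i + 1)) =
    ∑ i ∈ Finset.range m,
      ((carP (Fintype.card F) r (a i) : Polynomial F) : PowerSeries F) *
        f ^ Fintype.card F ^ i := by
  rw [map_sum]
  refine Finset.sum_congr rfl fun i _ => ?_
  rw [pow_succ, pow_mul, mul_comm, car_pow_mul hr, coe_carP Fintype.card_pos, mul_comm]

lemma exists_rel_zero (f : PowerSeries F) (j : ℕ) : ∀ (m : ℕ) (a : ℕ → Polynomial F),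
    j < m → a j ≠ 0 →
      ∑ i ∈ Finset.range m, (a i : PowerSeries F) * f ^ Fintype.card F ^ i = 0 →
    ∃ (m : ℕ) (a : ℕ → Polynomial F), a 0 ≠ 0 ∧
      ∑ i ∈ Finset.range (m + 1), (a i : PowerSeries F) * f ^ Fintype.card F ^ i = 0 := by
  induction j with
  | zero =>
    intro m a hm ha h
    obtain ⟨m, rfl⟩ := Nat.exists_eq_succ_of_ne_zero hm.ne'
    exact ⟨m, a, ha, h⟩
  | succ j ih =>
    intro m a hm ha h
    obtain ⟨m, rfl⟩ := Nat.exists_eq_succ_of_ne_zero (Nat.ne_of_gt (Nat.zero_lt_of_lt hm))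
    by_cases h0 : a 0 = 0
    · obtain ⟨r, hr, hne⟩ := exists_carP_ne (q := Fintype.card F) Fintype.card_pos _ ha
      refine ih m (fun i => carP (Fintype.card F) r (a (i + 1))) (by omega) hne ?_
      rw [Finset.sum_range_succ', h0] at h
      rw [← car_rel f m (fun i => a (i + 1)) hr]
      simp only [Polynomial.coe_zero, zero_mul, add_zero] at h
      rw [h, map_zero]
    · exact ⟨m, a, h0, h⟩

lemma finite_natDegree_le (N : ℕ) : {c : Polynomial F | c.natDegree ≤ N}.Finite := by
  refine Set.Finite.of_finite_image (f := fun c : Polynomial F => fun i : Fin (N + 1) => c.coeff i)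
    (Set.toFinite _) ?_
  intro c hc d hd h
  ext i
  by_cases hi : i < N + 1
  · exact congrFun h ⟨i, hi⟩
  · simp only [Set.mem_ofPred_eq] at hc hd
    rw [Polynomial.coeff_eq_zero_of_natDegree_lt (by omega),
      Polynomial.coeff_eq_zero_of_natDegree_lt (by omega)]

lemma finite_of_alg (f : PowerSeries F) (hf : ∃ G : Polynomial (Polynomial F), G ≠ 0 ∧
      Polynomial.eval₂ Polynomial.coeToPowerSeries.ringHom f G = 0) :
    ∃ H : Set (PowerSeries F), H.Finite ∧ f ∈ H ∧
      ∀ g ∈ H, ∀ r < Fintype.card F, car (Fintype.card F) r g ∈ H := by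
  classical
  obtain ⟨m, j, a, hj, haj, hrel⟩ := exists_rel f hf
  obtain ⟨m, a, ha0, hrel⟩ := exists_rel_zero f j m a hj haj hrel
  clear hj haj j
  set q := Fintype.card F with hqdef
  have hq1 : 1 < q := Fintype.one_lt_card
  let N := (Finset.range (m + 1)).sup fun i => (a i).natDegree
  have hN : ∀ i < m + 1, (a i).natDegree ≤ N := fun i hi =>
    Finset.le_sup (f := fun i => (a i).natDegree) (Finset.mem_range.2 hi)
  let H : Set (PowerSeries F) := {h | ∃ c : ℕ → Polynomial F, (∀ i, (c i).natDegree ≤ N) ∧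
    (a 0 : PowerSeries F) * h =
      ∑ i ∈ Finset.range (m + 1), (c i : PowerSeries F) * f ^ q ^ i}
  have ha0' : (a 0 : PowerSeries F) ≠ 0 := by
    simpa using ha0
  refine ⟨H, ?_, ?_, ?_⟩
  · -- finiteness
    have hT : {c : Fin (m + 1) → Polynomial F | ∀ i, (c i).natDegree ≤ N}.Finite := by
      have := Set.Finite.pi (fun _ : Fin (m + 1) => finite_natDegree_le (F := F) N)
      refine this.subset ?_
      intro c hc i _
      exact hc i
    have hT2 := hT.image
      (fun c => ∑ i : Fin (m + 1), (c i : PowerSeries F) * f ^ q ^ (i : ℕ))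
    refine Set.Finite.of_finite_image (f := fun h => (a 0 : PowerSeries F) * h)
      (hT2.subset ?_) (fun x _ y _ h => mul_left_cancel₀ ha0' h)
    rintro _ ⟨h, ⟨c, hc, e⟩, rfl⟩
    refine ⟨fun i => c i, fun i => hc i, ?_⟩
    simp only [e]
    rw [Finset.sum_range]
  · refine ⟨fun i => if i = 0 then a 0 else 0, ?_, ?_⟩
    · intro i
      simp only
      split_ifs
      · exact hN 0 (by omega)
      · simp
    · rw [Finset.sum_range_succ']
      simp
  · rintro h ⟨c, hc, e⟩ r hr
    obtain ⟨t, ht⟩ : ∃ t, q = t + 2 := ⟨q - 2, by omega⟩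
    let b : ℕ → Polynomial F := fun i =>
      if i < m then a 0 ^ (t + 1) * c (i + 1) - a 0 ^ t * c 0 * a (i + 1) else 0
    have hb : ∀ i, (b i).natDegree < (N + 1) * q := by
      intro i
      have h00 := hN 0 (by omega)
      have hp : ∀ k, (a 0 ^ k).natDegree ≤ k * N := fun k =>
        Polynomial.natDegree_pow_le.trans (Nat.mul_le_mul_left _ h00)
      have hle : (b i).natDegree ≤ (t + 2) * N := by
        simp only [b]
        split_ifs with hi
        · refine (Polynomial.natDegree_sub_le _ _).trans (max_le ?_ ?_)
          · refine Polynomial.natDegree_mul_le.trans ?_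
            have := hp (t + 1)
            have := hc (i + 1)
            linarith
          · refine Polynomial.natDegree_mul_le.trans ?_
            have h1 := Polynomial.natDegree_mul_le (p := a 0 ^ t) (q := c 0)
            have := hp t
            have := hc 0
            have := hN (i + 1) (by omega)
            linarith
        · simp
      rw [ht]
      nlinarith
    have key : (a 0 : PowerSeries F) ^ q * h =
        ∑ i ∈ Finset.range m, (b i : PowerSeries F) * f ^ q ^ (i + 1) := by
      have h1 : ∑ i ∈ Finset.range m, (b i : PowerSeries F) * f ^ q ^ (i + 1) =
          (a 0 : PowerSeries F) ^ (t + 1) *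
            ∑ i ∈ Finset.range m, (c (i + 1) : PowerSeries F) * f ^ q ^ (i + 1) -
          (a 0 : PowerSeries F) ^ t * (c 0 : PowerSeries F) *
            ∑ i ∈ Finset.range m, (a (i + 1) : PowerSeries F) * f ^ q ^ (i + 1) := by
        rw [Finset.mul_sum, Finset.mul_sum, ← Finset.sum_sub_distrib]
        refine Finset.sum_congr rfl fun i hi => ?_
        simp only [b, if_pos (Finset.mem_range.1 hi)]
        push_cast
        ring
      rw [Finset.sum_range_succ'] at e hrel
      rw [h1, eq_sub_of_add_eq e.symm, eq_neg_of_add_eq_zero_left hrel, ht]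
      ring
    have key2 := congrArg (car q r) key
    rw [car_pow_mul hr, car_rel f m b hr] at key2
    refine ⟨fun i => carP q r (b i), fun i => natDegree_carP (by omega) _ _ _ (hb i), ?_⟩
    rw [key2, Finset.sum_range_succ]
    have hbm : carP q r (b m) = 0 := by simp [b, carP]
    beta_reduce
    rw [hbm, Polynomial.coe_zero, zero_mul, add_zero]

lemma car_mem (f : PowerSeries F) (H : Set (PowerSeries F)) (hf : f ∈ H)
    (hst : ∀ g ∈ H, ∀ r < Fintype.card F, car (Fintype.card F) r g ∈ H) (a : ℕ) :
    ∀ r < Fintype.card F ^ a, car (Fintype.card F ^ a) r f ∈ H := by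
  induction a with
  | zero =>
    intro r hr
    have : car (Fintype.card F ^ 0) r f = f := by
      ext n
      have : r = 0 := by simpa using hr
      simp [this]
    rwa [this]
  | succ a ih =>
    intro r hr
    have hpos : 0 < Fintype.card F ^ a := pow_pos Fintype.card_pos _
    have : car (Fintype.card F ^ (a + 1)) r f =
        car (Fintype.card F) (r / Fintype.card F ^ a)
          (car (Fintype.card F ^ a) (r % Fintype.card F ^ a) f) := by
      ext n
      rw [coeff_car, coeff_car, coeff_car]
      congr 2
      conv_lhs => rw [← Nat.div_add_mod' r (Fintype.card F ^ a)]
      ring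
    rw [this]
    refine hst _ (ih _ (Nat.mod_lt _ hpos)) _ ?_
    rw [Nat.div_lt_iff_lt_mul hpos, ← pow_succ']
    exact hr

end
end ChristolAux



/-- **Christol's theorem** (Theorem 4 of the paper).
A power series `f = ∑ u_n Xⁿ` over a finite field `𝔽_q` of characteristic `p`
is algebraic over `𝔽_q(X)` if and only if the `p`-kernel
`{ n ↦ u(n·p^k + r) : k ∈ ℕ, 0 ≤ r < p^k }` of the coefficient sequence `u`
is finite. -/
theorem christol
    (F : Type*) [Field F] [Fintype F] (p : ℕ) [Fact p.Prime] [CharP F p]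
    (u : ℕ → F) :
    (∃ G : Polynomial (Polynomial F), G ≠ 0 ∧
        Polynomial.eval₂ Polynomial.coeToPowerSeries.ringHom
          (PowerSeries.mk u) G = 0) ↔
      {v : ℕ → F | ∃ k r : ℕ, r < p ^ k ∧ v = fun n => u (n * p ^ k + r)}.Finite := by
  obtain ⟨s, hp', hs⟩ := FiniteField.card F p
  have hs0 : 0 < (s : ℕ) := s.pos
  have hppos : 0 < p := hp'.pos
  constructor
  · intro h
    obtain ⟨H, hH, hf, hst⟩ := ChristolAux.finite_of_alg _ h
    have hmem := ChristolAux.car_mem _ H hf hst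
    have hfin := (hH.prod ((Set.finite_Iio (s : ℕ)).prod (Set.finite_Iio (p ^ (s : ℕ))))).image
      (fun x : PowerSeries F × ℕ × ℕ => fun n : ℕ =>
        PowerSeries.coeff (n * p ^ x.2.1 + x.2.2) x.1)
    refine hfin.subset ?_
    rintro v ⟨k, r, hr, rfl⟩
    have hpow : p ^ k = p ^ (k % s) * Fintype.card F ^ (k / s) := by
      rw [hs, ← pow_mul, ← pow_add, Nat.mod_add_div]
    have hpos : 0 < Fintype.card F ^ (k / s) := pow_pos Fintype.card_pos _
    refine ⟨(_, k % s, r / Fintype.card F ^ (k / s)),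
      ⟨hmem (k / s) (r % Fintype.card F ^ (k / s)) (Nat.mod_lt _ hpos),
        Nat.mod_lt _ hs0, ?_⟩, ?_⟩
    · have h1 : r / Fintype.card F ^ (k / s) < p ^ (k % s) := by
        rw [Nat.div_lt_iff_lt_mul hpos, ← hpow]
        exact hr
      exact h1.trans_le (Nat.pow_le_pow_right hppos (Nat.mod_lt _ hs0).le)
    · funext n
      simp only [ChristolAux.coeff_car, PowerSeries.coeff_mk]
      congr 1
      rw [hpow]
      conv_rhs => rw [← Nat.div_add_mod' r (Fintype.card F ^ (k / s))]
      ring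
  · intro h
    refine ChristolAux.alg_of_finite _ (h.image PowerSeries.mk) ?_ _
      ⟨u, ⟨0, 0, by simp, by simp⟩, rfl⟩
    rintro _ ⟨_, ⟨k, r0, hr0, rfl⟩, rfl⟩ r hr
    refine ⟨_, ⟨k + s, r * p ^ k + r0, ?_, rfl⟩, ?_⟩
    · rw [hs] at hr
      calc r * p ^ k + r0 < r * p ^ k + p ^ k := by omega
        _ = (r + 1) * p ^ k := by ring
        _ ≤ p ^ (s : ℕ) * p ^ k := Nat.mul_le_mul_right _ hr
        _ = p ^ (k + s) := by ring
    · ext n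
      rw [ChristolAux.coeff_car, PowerSeries.coeff_mk, PowerSeries.coeff_mk, hs]
      congr 1
      ring
end

section
/- Let 𝔽_q be a finite field of characteristic p. If the formal power series f = Σ_{n≥0} u_n Xⁿ ∈ 𝔽_q[[X]] is algebraic over the rational function field 𝔽_q(X) (i.e., some nonzero polynomial in Y with coefficients in 𝔽_q[X] vanishes at f), then the p-kernel of the sequence u, namely the set of sequences { n ↦ u(n·p^k + r) : k ∈ ℕ, 0 ≤ r < p^k }, is finite. -/
open PowerSeries in
/-- Section operator. -/
noncomputable def csec {F : Type*} [Field F] (q r : ℕ) : PowerSeries F →+ PowerSeries F where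
  toFun f := PowerSeries.mk fun n => PowerSeries.coeff (q * n + r) f
  map_zero' := by ext n; simp
  map_add' a b := by ext n; simp

theorem coeff_csec {F : Type*} [Field F] (q r n : ℕ) (f : PowerSeries F) :
    PowerSeries.coeff n (csec q r f) = PowerSeries.coeff (q * n + r) f := by
  simp [csec]

/-- degree bounded by `N`. -/
def IsP {F : Type*} [Field F] (N : ℕ) (f : PowerSeries F) : Prop :=
  ∀ n, N < n → PowerSeries.coeff n f = 0

theorem IsP.mono {F : Type*} [Field F] {N M : ℕ} {f : PowerSeries F} (h : IsP N f) (hM : N ≤ M) :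
    IsP M f := fun n hn => h n (by omega)

theorem IsP.zero {F : Type*} [Field F] {N : ℕ} : IsP N (0 : PowerSeries F) := fun n hn => by simp

theorem IsP.add {F : Type*} [Field F] {N : ℕ} {f g : PowerSeries F} (h : IsP N f) (h' : IsP N g) :
    IsP N (f + g) := fun n hn => by simp [h n hn, h' n hn]

theorem IsP.neg {F : Type*} [Field F] {N : ℕ} {f : PowerSeries F} (h : IsP N f) :
    IsP N (-f) := fun n hn => by simp [h n hn]

theorem IsP.mul {F : Type*} [Field F] {N M : ℕ} {f g : PowerSeries F} (h : IsP N f)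
    (h' : IsP M g) : IsP (N + M) (f * g) := fun n hn => by
  rw [PowerSeries.coeff_mul]
  refine Finset.sum_eq_zero fun x hx => ?_
  have hx := Finset.HasAntidiagonal.mem_antidiagonal.1 hx
  by_cases hN : N < x.1
  · rw [h _ hN, zero_mul]
  · rw [h' _ (by omega), mul_zero]

theorem IsP.pow {F : Type*} [Field F] {N : ℕ} {f : PowerSeries F} (h : IsP N f) (k : ℕ) :
    IsP (k * N) (f ^ k) := by
  induction k with
  | zero =>
    intro n hn
    rw [pow_zero, PowerSeries.coeff_one, if_neg (by omega)]
  | succ k ih =>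
    rw [pow_succ]
    exact (ih.mul h).mono (by rw [Nat.succ_mul])

theorem IsP.sec {F : Type*} [Field F] {N q r : ℕ} (hq : 2 ≤ q) {f : PowerSeries F}
    (h : IsP (N + N) f) : IsP N (csec q r f) := fun n hn => by
  rw [coeff_csec]
  exact h _ (by nlinarith)

theorem ps_pow_card {F : Type*} [Field F] [Fintype F] (g : PowerSeries F) (n : ℕ) :
    PowerSeries.coeff n (g ^ Fintype.card F) =
      if Fintype.card F ∣ n then PowerSeries.coeff (n / Fintype.card F) g else 0 := by
  obtain ⟨p, hp⟩ := CharP.exists F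
  obtain ⟨s, hpp, hs⟩ := FiniteField.card F p
  have : Fact p.Prime := ⟨hpp⟩
  have : CharP (PowerSeries F) p :=
    charP_of_injective_ringHom (PowerSeries.C_injective (R := F)) p
  have hqpos : 0 < Fintype.card F := Fintype.card_pos
  obtain ⟨k, hk⟩ : (PowerSeries.X : PowerSeries F) ^ (n + 1) ∣
      g - (PowerSeries.trunc (n + 1) g : Polynomial F) := by
    rw [PowerSeries.X_pow_dvd_iff]
    intro m hm
    simp [PowerSeries.coeff_trunc, hm]
  have hg : g = ((PowerSeries.trunc (n + 1) g : Polynomial F) : PowerSeries F) + PowerSeries.X ^ (n + 1) * k := by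
    rw [← hk]; ring
  have h1 : g ^ Fintype.card F = (((PowerSeries.trunc (n + 1) g) ^ Fintype.card F : Polynomial F) : PowerSeries F) +
      PowerSeries.X ^ ((n + 1) * Fintype.card F) * k ^ Fintype.card F := by
    conv_lhs => rw [hg]
    rw [hs, add_pow_char_pow, mul_pow, ← pow_mul, Polynomial.coe_pow]
  have hlt : ¬ (n + 1) * Fintype.card F ≤ n := by nlinarith
  rw [h1, map_add, ← FiniteField.expand_card, Polynomial.coeff_coe,
    Polynomial.coeff_expand hqpos, PowerSeries.coeff_X_pow_mul', if_neg hlt, add_zero]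
  split_ifs
  · rw [PowerSeries.coeff_trunc, if_pos]
    exact Nat.lt_succ_of_le (Nat.div_le_self _ _)
  · rfl

theorem csec_pow_mul {F : Type*} [Field F] [Fintype F] (r : ℕ) (hr : r < Fintype.card F)
    (g h : PowerSeries F) :
    csec (Fintype.card F) r (g ^ Fintype.card F * h) = g * csec (Fintype.card F) r h := by
  have hqpos : 0 < Fintype.card F := Fintype.card_pos
  ext n
  rw [coeff_csec, PowerSeries.coeff_mul, PowerSeries.coeff_mul]
  symm
  set q := Fintype.card F with hq
  refine Finset.sum_of_injOn (fun x => (q * x.1, q * x.2 + r)) ?_ ?_ ?_ ?_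
  · rintro ⟨a, b⟩ _ ⟨c, d⟩ _ hab
    simp only [Prod.mk.injEq, add_left_inj, mul_eq_mul_left_iff] at hab
    ext <;> simp <;> omega
  · rintro ⟨a, b⟩ hab
    have hab : a + b = n := Finset.HasAntidiagonal.mem_antidiagonal.1 hab
    refine Finset.HasAntidiagonal.mem_antidiagonal.2 ?_
    simp only
    rw [← hab]; ring
  · rintro ⟨a, b⟩ hab hn
    rw [ps_pow_card, ← hq]
    have hab : a + b = q * n + r := Finset.HasAntidiagonal.mem_antidiagonal.1 hab
    split_ifs with hd
    · exfalso
      obtain ⟨c, rfl⟩ := hd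
      apply hn
      have hc : c ≤ n := by
        by_contra hc
        have : q * (n + 1) ≤ q * c := Nat.mul_le_mul_left _ (by omega)
        rw [mul_add] at this
        omega
      obtain ⟨d, rfl⟩ := Nat.exists_eq_add_of_le hc
      refine ⟨(c, d), by simp, ?_⟩
      rw [mul_add] at hab
      simp only [Prod.mk.injEq, true_and]
      omega
    · simp
  · rintro ⟨a, b⟩ hab
    simp only
    rw [ps_pow_card, if_pos (Dvd.intro _ rfl), Nat.mul_div_cancel_left _ hqpos, coeff_csec]

theorem not_li_aux {R S K L : Type*} [CommRing R] [IsDomain R] [CommRing S] [IsDomain S]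
    [Field K] [Field L] [Algebra R S] [Algebra R K] [IsFractionRing R K] [Algebra S L]
    [Algebra R L] [IsScalarTower R S L] [Algebra K L] [IsScalarTower R K L]
    (hSL : Function.Injective (algebraMap S L))
    (f : S) (hf : IsAlgebraic R f) (e : ℕ → ℕ) :
    ¬ LinearIndependent R (fun i => f ^ e i) := by
  intro hli
  let x : L := algebraMap S L f
  have hx : IsIntegral K x := by
    have : IsAlgebraic R x := hf.algebraMap
    exact (this.extendScalars (IsFractionRing.injective R K)).isIntegral
  have h1 : LinearIndependent R (fun i => x ^ e i) := by
    have := hli.map' (IsScalarTower.toAlgHom R S L).toLinearMap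
      (LinearMap.ker_eq_bot.2 hSL)
    have h : (fun i => x ^ e i) = (IsScalarTower.toAlgHom R S L).toLinearMap ∘ fun i => f ^ e i := by
      funext i
      simp [x]
    rw [h]; exact this
  have h2 : LinearIndependent K (fun i => x ^ e i) := (LinearIndependent.iff_fractionRing R K).1 h1
  have : FiniteDimensional K (IntermediateField.adjoin K {x}) :=
    IntermediateField.adjoin.finiteDimensional hx
  let y := IntermediateField.AdjoinSimple.gen K x
  have h3 : LinearIndependent K (fun i => y ^ e i) := by
    apply LinearIndependent.of_comp (IntermediateField.val _).toLinearMap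
    have h : (fun i => x ^ e i) =
        (IntermediateField.val (IntermediateField.adjoin K {x})).toLinearMap ∘
          fun i => y ^ e i := by
      funext i
      simp [y]
    rw [← h]; exact h2
  have := h3.finite
  exact not_finite ℕ

theorem not_li {R S : Type*} [CommRing R] [IsDomain R] [CommRing S] [IsDomain S] [Algebra R S]
    [FaithfulSMul R S] (f : S) (hf : IsAlgebraic R f) (e : ℕ → ℕ) :
    ¬ LinearIndependent R (fun i => f ^ e i) := by
  letI : Algebra (FractionRing R) (FractionRing S) := FractionRing.liftAlgebra R (FractionRing S)
  have : IsScalarTower R (FractionRing R) (FractionRing S) :=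
    FractionRing.isScalarTower_liftAlgebra R (FractionRing S)
  exact not_li_aux (K := FractionRing R) (L := FractionRing S)
    (IsFractionRing.injective S (FractionRing S)) f hf e

theorem ore_step {F : Type*} [Field F] [Fintype F] (f : PowerSeries F) (N m j : ℕ) :
    ∀ A : ℕ → PowerSeries F, (∀ i, IsP N (A i)) → (∀ i, m ≤ i → A i = 0) →
    ∑ i ∈ Finset.range m, A i * f ^ (Fintype.card F ^ i) = 0 → A j ≠ 0 →
    ∃ A : ℕ → PowerSeries F, (∀ i, IsP N (A i)) ∧ (∀ i, m ≤ i → A i = 0) ∧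
      ∑ i ∈ Finset.range m, A i * f ^ (Fintype.card F ^ i) = 0 ∧ A 0 ≠ 0 := by
  induction j with
  | zero => exact fun A h1 h2 h3 h4 => ⟨A, h1, h2, h3, h4⟩
  | succ j ih =>
    intro A h1 h2 h3 h4
    by_cases h0 : A 0 = 0
    · obtain ⟨n, hn⟩ : ∃ n, PowerSeries.coeff n (A (j + 1)) ≠ 0 := by
        by_contra! hc
        exact h4 (by ext n; simpa using hc n)
      have hr : n % Fintype.card F < Fintype.card F := Nat.mod_lt _ Fintype.card_pos
      refine ih (fun i => csec (Fintype.card F) (n % Fintype.card F) (A (i + 1))) ?_ ?_ ?_ ?_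
      · intro i
        exact IsP.sec Fintype.one_lt_card ((h1 _).mono (by omega))
      · intro i hi
        rw [h2 (i + 1) (by omega), map_zero]
      · have h5 : ∑ i ∈ Finset.range (m + 1), A i * f ^ (Fintype.card F ^ i) = 0 := by
          rw [Finset.sum_range_succ, h3, h2 m le_rfl]; simp
        rw [Finset.sum_range_succ', h0, zero_mul, add_zero] at h5
        have h6 := congrArg (csec (Fintype.card F) (n % Fintype.card F)) h5
        rw [map_sum, map_zero] at h6
        rw [← h6]
        refine Finset.sum_congr rfl fun i _ => ?_
        rw [pow_succ, pow_mul, mul_comm (A (i + 1)), csec_pow_mul _ hr, mul_comm]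
      · intro h
        apply hn
        have := congrArg (PowerSeries.coeff (n / Fintype.card F)) h
        rw [coeff_csec, Nat.div_add_mod] at this
        simpa using this
    · exact ⟨A, h1, h2, h3, h0⟩

theorem ore {F : Type*} [Field F] [Fintype F] (f : PowerSeries F)
    (halg : ∃ G : Polynomial (Polynomial F), G ≠ 0 ∧
      Polynomial.eval₂ Polynomial.coeToPowerSeries.ringHom f G = 0) :
    ∃ (N m : ℕ) (A : ℕ → PowerSeries F), (∀ i, IsP N (A i)) ∧ (∀ i, m ≤ i → A i = 0) ∧
      ∑ i ∈ Finset.range m, A i * f ^ (Fintype.card F ^ i) = 0 ∧ A 0 ≠ 0 := by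
  have hinj : Function.Injective (Polynomial.coeToPowerSeries.ringHom (R := F)) :=
    Polynomial.coe_injective F
  letI : Algebra (Polynomial F) (PowerSeries F) :=
    (Polynomial.coeToPowerSeries.ringHom (R := F)).toAlgebra
  have : FaithfulSMul (Polynomial F) (PowerSeries F) :=
    (faithfulSMul_iff_algebraMap_injective _ _).2 hinj
  have hf : IsAlgebraic (Polynomial F) f := by
    obtain ⟨G, hG, h⟩ := halg
    exact ⟨G, hG, h⟩
  have := not_li f hf (fun i => Fintype.card F ^ i)
  rw [not_linearIndependent_iff] at this
  obtain ⟨s, g, hs, j, hj, hgj⟩ := this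
  classical
  have hN : ∀ i ∈ s, (g i).natDegree ≤ s.sup fun i => (g i).natDegree := fun i hi =>
    Finset.le_sup (f := fun i => (g i).natDegree) hi
  have hm : ∀ i ∈ s, i < s.sup id + 1 := fun i hi =>
    Nat.lt_succ_of_le (Finset.le_sup (f := id) hi)
  refine ⟨s.sup fun i => (g i).natDegree, s.sup id + 1, ore_step f _ _ j
    (fun i => if i ∈ s then (g i : PowerSeries F) else 0) ?_ ?_ ?_ ?_⟩
  · intro i
    split_ifs with hi
    · intro n hn
      rw [Polynomial.coeff_coe]
      exact Polynomial.coeff_eq_zero_of_natDegree_lt ((hN i hi).trans_lt hn)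
    · exact IsP.zero
  · intro i hi
    exact if_neg fun h => by have := hm i h; omega
  · refine Eq.trans (Eq.symm ?_) hs
    refine Finset.sum_subset_zero_on_sdiff (fun i hi => Finset.mem_range.2 (hm i hi)) ?_ ?_
    · intro i hi
      rw [Finset.mem_sdiff] at hi
      simp [hi.2]
    · intro i hi
      rw [if_pos hi]
      rfl
  · simp only [if_pos hj]
    intro h
    exact hgj (hinj (by rw [map_zero]; exact h))

theorem finite_kernel_set {F : Type*} [Field F] [Fintype F] (f : PowerSeries F)
    (halg : ∃ G : Polynomial (Polynomial F), G ≠ 0 ∧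
      Polynomial.eval₂ Polynomial.coeToPowerSeries.ringHom f G = 0) :
    ∃ H : Set (PowerSeries F), H.Finite ∧ f ∈ H ∧
      ∀ h ∈ H, ∀ r < Fintype.card F, csec (Fintype.card F) r h ∈ H := by
  obtain ⟨N₀, m, A, hA, hA', hsum, hA0⟩ := ore f halg
  set q := Fintype.card F with hq
  have hq2 : 2 ≤ q := Fintype.one_lt_card
  have hqm : ∀ {i j : ℕ}, i ≤ j → q ^ i ≤ q ^ j := fun h => Nat.pow_le_pow_right (by omega) h
  have hq1 : ∀ i, 2 ≤ q ^ (i + 1) := fun i => by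
    calc 2 ≤ q ^ 1 := by simpa using hq2
      _ ≤ _ := hqm (by omega)
  set a := A 0 with ha
  -- relation with top index `m + 1`
  have hrel : a * f = - ∑ i ∈ Finset.range (m + 1), A (i + 1) * f ^ (q ^ (i + 1)) := by
    have h5 : ∑ i ∈ Finset.range (m + 2), A i * f ^ (q ^ i) = 0 := by
      rw [Finset.sum_range_succ, Finset.sum_range_succ, hsum, hA' m le_rfl, hA' (m + 1) (by omega)]
      simp
    rw [Finset.sum_range_succ', pow_zero, pow_one] at h5
    rw [← ha] at h5
    linear_combination h5
  let B : ℕ → PowerSeries F := fun i => - (A (i + 1) * a ^ (q ^ (i + 1) - 2))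
  have hrelB : a ^ (q ^ (m + 1) - 1) * f =
      ∑ i ∈ Finset.range (m + 1), B i * (a ^ (q ^ (m + 1) - q ^ (i + 1)) * f ^ (q ^ (i + 1))) := by
    have h1 : a ^ (q ^ (m + 1) - 1) = a ^ (q ^ (m + 1) - 2) * a := by
      rw [← pow_succ]; congr 1; have := hq1 m; omega
    rw [h1, mul_assoc, hrel, ← Finset.sum_neg_distrib, Finset.mul_sum]
    refine Finset.sum_congr rfl fun i hi => ?_
    rw [Finset.mem_range] at hi
    have h2 : a ^ (q ^ (m + 1) - 2) = a ^ (q ^ (i + 1) - 2) * a ^ (q ^ (m + 1) - q ^ (i + 1)) := by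
      rw [← pow_add]; congr 1
      have := hq1 i
      have : q ^ (i + 1) ≤ q ^ (m + 1) := hqm (by omega)
      omega
    rw [h2]; simp only [B]; ring
  set N := N₀ + q ^ (m + 1) * N₀ with hN
  have hB : ∀ i, i < m + 1 → IsP N (B i) := fun i hi => by
    refine ((hA (i + 1)).mul ((hA 0).pow (q ^ (i + 1) - 2))).neg.mono ?_
    rw [hN]
    have : q ^ (i + 1) ≤ q ^ (m + 1) := hqm (by omega)
    exact Nat.add_le_add_left (Nat.mul_le_mul_right _ (by omega)) _
  let T : (ℕ → PowerSeries F) → PowerSeries F := fun C =>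
    ∑ i ∈ Finset.range (m + 2), C i * (a ^ (q ^ (m + 1) - q ^ i) * f ^ (q ^ i))
  refine ⟨{h | ∃ C : ℕ → PowerSeries F, (∀ i, IsP N (C i)) ∧ a ^ (q ^ (m + 1)) * h = T C},
    ?_, ?_, ?_⟩
  · let P : (Fin (m + 2) → Fin (N + 1) → F) → ℕ → PowerSeries F := fun c i =>
      PowerSeries.mk fun n => if hi : i < m + 2 then if hn : n < N + 1 then c ⟨i, hi⟩ ⟨n, hn⟩ else 0
        else 0
    refine Set.Finite.subset (Set.finite_iUnion (ι := Fin (m + 2) → Fin (N + 1) → F)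
      (f := fun c => {h | a ^ (q ^ (m + 1)) * h = T (P c)}) fun c => ?_) ?_
    · apply Set.Subsingleton.finite
      intro h hh h' hh'
      exact mul_left_cancel₀ (pow_ne_zero _ hA0) (Eq.trans hh (Eq.symm hh'))
    · rintro h ⟨C, hC, hh⟩
      rw [Set.mem_iUnion]
      refine ⟨fun i n => PowerSeries.coeff n (C i), ?_⟩
      rw [Set.mem_ofPred_eq, hh]
      refine Finset.sum_congr rfl fun i hi => ?_
      rw [Finset.mem_range] at hi
      congr 1
      ext n
      simp only [P, PowerSeries.coeff_mk, dif_pos hi]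
      split_ifs with hn
      · rfl
      · exact hC i n (by omega)
  · refine ⟨fun i => if i = 0 then a else 0, ?_, ?_⟩
    · intro i
      simp only
      split_ifs
      · exact (hA 0).mono (by rw [hN]; omega)
      · exact IsP.zero
    · simp only [T]
      rw [Finset.sum_eq_single 0]
      · rw [if_pos rfl, pow_zero, pow_one, ← mul_assoc, ← pow_succ']
        congr 2
        have := hq1 m; omega
      · intro i _ hi
        rw [if_neg hi, zero_mul]
      · intro h; simp at h
  · rintro h ⟨C, hC, hh⟩ r hr
    have h1 : a ^ (q ^ (m + 1)) * h = ∑ i ∈ Finset.range (m + 1),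
        (a ^ (q ^ m - q ^ i) * f ^ (q ^ i)) ^ q * (C (i + 1) + C 0 * B i) := by
      rw [hh]
      simp only [T]
      rw [Finset.sum_range_succ', pow_zero, pow_one, hrelB, Finset.mul_sum,
        ← Finset.sum_add_distrib]
      refine Finset.sum_congr rfl fun i hi => ?_
      have : (a ^ (q ^ m - q ^ i) * f ^ (q ^ i)) ^ q =
          a ^ (q ^ (m + 1) - q ^ (i + 1)) * f ^ (q ^ (i + 1)) := by
        rw [mul_pow, ← pow_mul, ← pow_mul, Nat.sub_mul, ← pow_succ, ← pow_succ]
      rw [this]; ring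
    have h2 : a ^ (q ^ m) * csec q r h = ∑ i ∈ Finset.range (m + 1),
        (a ^ (q ^ m - q ^ i) * f ^ (q ^ i)) * csec q r (C (i + 1) + C 0 * B i) := by
      have h3 := congrArg (csec q r) h1
      rw [pow_succ, pow_mul, csec_pow_mul r hr, map_sum] at h3
      rw [h3]
      exact Finset.sum_congr rfl fun i _ => csec_pow_mul r hr _ _
    refine ⟨fun i => if i < m + 1 then csec q r (C (i + 1) + C 0 * B i) else 0, ?_, ?_⟩
    · intro i
      simp only
      split_ifs with hi
      · exact IsP.sec hq2 (((hC _).mono (by omega)).add ((hC 0).mul (hB i hi)))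
      · exact IsP.zero
    · simp only [T]
      rw [Finset.sum_range_succ, if_neg (lt_irrefl _), zero_mul, add_zero]
      have h4 : a ^ (q ^ (m + 1)) = a ^ (q ^ (m + 1) - q ^ m) * a ^ (q ^ m) := by
        rw [← pow_add]; congr 1
        have : q ^ m ≤ q ^ (m + 1) := hqm (by omega)
        omega
      rw [h4, mul_assoc, h2, Finset.mul_sum]
      refine Finset.sum_congr rfl fun i hi => ?_
      rw [Finset.mem_range] at hi
      rw [if_pos hi]
      have h5 : a ^ (q ^ (m + 1) - q ^ i) = a ^ (q ^ (m + 1) - q ^ m) * a ^ (q ^ m - q ^ i) := by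
        rw [← pow_add]; congr 1
        have : q ^ m ≤ q ^ (m + 1) := hqm (by omega)
        have : q ^ i ≤ q ^ m := hqm (by omega)
        omega
      rw [h5]; ring

/-- **One direction of Christol's theorem** (Corollary 1 of the paper).
If the power series `f = ∑ u_n Xⁿ` over a finite field `𝔽_q` of
characteristic `p` is algebraic over `𝔽_q(X)`, then the `p`-kernel
`{ n ↦ u(n·p^k + r) : k ∈ ℕ, 0 ≤ r < p^k }` of `u` is finite. -/
theorem kernel_finite_of_algebraic
    (F : Type*) [Field F] [Fintype F] (p : ℕ) [Fact p.Prime] [CharP F p]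
    (u : ℕ → F)
    (halg : ∃ G : Polynomial (Polynomial F), G ≠ 0 ∧
      Polynomial.eval₂ Polynomial.coeToPowerSeries.ringHom
        (PowerSeries.mk u) G = 0) :
    {v : ℕ → F | ∃ k r : ℕ, r < p ^ k ∧ v = fun n => u (n * p ^ k + r)}.Finite := by
  obtain ⟨H, hfin, hf, hH⟩ := finite_kernel_set _ halg
  obtain ⟨s, hpp, hs⟩ := FiniteField.card F p
  set q := Fintype.card F with hq
  have hqpos : 0 < q := Fintype.card_pos
  have key : ∀ k r : ℕ, r < q ^ k → PowerSeries.mk (fun n => u (n * q ^ k + r)) ∈ H := by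
    intro k
    induction k with
    | zero =>
      intro r hr
      obtain rfl : r = 0 := by simpa using hr
      simpa using hf
    | succ k ih =>
      intro r hr
      have hqk : 0 < q ^ k := pow_pos hqpos k
      have h1 := hH _ (ih (r % q ^ k) (Nat.mod_lt _ hqk)) (r / q ^ k)
        (Nat.div_lt_of_lt_mul (by rwa [← pow_succ]))
      convert h1 using 1
      ext n
      rw [coeff_csec, PowerSeries.coeff_mk, PowerSeries.coeff_mk]
      congr 1
      conv_lhs => rw [← Nat.div_add_mod r (q ^ k)]
      ring
  let Φ : PowerSeries F × ((Finset.range s ×ˢ Finset.range q : Finset (ℕ × ℕ))) → ℕ → F :=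
    fun x n => PowerSeries.coeff (n * p ^ x.2.1.1 + x.2.1.2) x.1
  refine Set.Finite.subset ((hfin.prod Set.finite_univ).image Φ) ?_
  rintro v ⟨k, r, hr, rfl⟩
  have hspos : 0 < (s : ℕ) := s.pos
  have hqk : 0 < q ^ (k / s) := pow_pos hqpos _
  have hpk : p ^ k = q ^ (k / s) * p ^ (k % s) := by
    rw [hs, ← pow_mul, ← pow_add, Nat.div_add_mod]
  have hr2 : r / q ^ (k / s) < p ^ (k % s) := Nat.div_lt_of_lt_mul (by rwa [← hpk])
  have hle : p ^ (k % s) ≤ q := by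
    rw [hs]; exact Nat.pow_le_pow_right hpp.pos (Nat.mod_lt _ hspos).le
  refine ⟨(PowerSeries.mk (fun n => u (n * q ^ (k / s) + r % q ^ (k / s))),
    ⟨(k % s, r / q ^ (k / s)), ?_⟩), ⟨key _ _ (Nat.mod_lt _ hqk), Set.mem_univ _⟩, ?_⟩
  · simp only [Finset.mem_product, Finset.mem_range]
    exact ⟨Nat.mod_lt _ hspos, by omega⟩
  · funext n
    simp only [Φ, PowerSeries.coeff_mk]
    congr 1
    conv_rhs => rw [hpk, ← Nat.div_add_mod r (q ^ (k / s))]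
    ring
end
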